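/- arXiv:2205.01856 — 2 statements merged into one kernel-verified Lean document; each statement's English description precedes it below -/
import Mathlib

section
/- (Müntz–Szász theorem, L² case) Let S be a subset of the nonnegative integers. The linear span of the monomials {xⁿ : n ∈ S} is dense in L²[0,1] if and only if ∑_{n∈S} 1/(n+1) = ∞. -/
open MeasureTheory Filter Topology

/-- The measure on `[0,1]` underlying the Hilbert space `L²[0,1]`. -/
noncomputable def mu01 : Measure ℝ := volume.restrict (Set.Icc 0 1)

/-- For a Gram matrix `1 / (m + n + 1)`, this is the factor by which projecting away from the
vectors indexed by `F` scales the vector with index `p`. -/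
noncomputable def blaschkeProd (F : Finset ℕ) (p : ℕ) : ℝ :=
  ∏ n ∈ F, ((p : ℝ) - n) / (p + n + 1)

lemma blaschkeProd_ne_zero {F : Finset ℕ} {p : ℕ} (hp : p ∉ F) : blaschkeProd F p ≠ 0 := by
  refine Finset.prod_ne_zero_iff.2 fun n hn => div_ne_zero (sub_ne_zero.2 ?_) (by positivity)
  intro h
  exact hp (Nat.cast_injective h ▸ hn)

section Hilbert

variable {H : Type*} [NormedAddCommGroup H] [InnerProductSpace ℂ H]

/-- Gram–Schmidt for vectors whose Gram matrix is the Hilbert matrix. -/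
lemma exists_residual {v : ℕ → H} (hv : ∀ m n, inner ℂ (v m) (v n) = 1 / ((m : ℂ) + n + 1))
    (F : Finset ℕ) :
    ∃ w : ℕ → H, (∀ p, v p - w p ∈ Submodule.span ℂ (v '' F)) ∧
      (∀ p, w p ∈ (Submodule.span ℂ (v '' F))ᗮ) ∧
      ∀ p q, inner ℂ (w p) (w q) =
        (blaschkeProd F p : ℂ) * blaschkeProd F q / ((p : ℂ) + q + 1) := by
  induction F using Finset.induction_on with
  | empty => exact ⟨v, by simp, by simp, by simp [hv, blaschkeProd]⟩
  | insert l F hl ih =>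
    obtain ⟨w, hsub, horth, hgram⟩ := ih
    have hden : ∀ p q : ℕ, (p : ℂ) + q + 1 ≠ 0 := fun p q => by exact_mod_cast (p + q).succ_ne_zero
    have hll : (l : ℂ) * 2 + 1 ≠ 0 := by exact_mod_cast (l * 2).succ_ne_zero
    have hbl : (blaschkeProd F l : ℂ) ≠ 0 := by exact_mod_cast blaschkeProd_ne_zero hl
    set c : ℕ → ℝ := fun p =>
      blaschkeProd F p * (l * 2 + 1) / (blaschkeProd F l * (p + l + 1)) with hc
    have hb : ∀ p, blaschkeProd (insert l F) p = ((p : ℝ) - l) / (p + l + 1) * blaschkeProd F p :=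
      fun p => Finset.prod_insert hl
    have hmono : Submodule.span ℂ (v '' F) ≤ Submodule.span ℂ (v '' (insert l F : Finset ℕ)) :=
      Submodule.span_mono (Set.image_mono (by simp))
    have hvl : v l ∈ Submodule.span ℂ (v '' (insert l F : Finset ℕ)) :=
      Submodule.subset_span ⟨l, by simp, rfl⟩
    have horth' : ∀ p, w p - (c p : ℂ) • w l ∈ (Submodule.span ℂ (v '' F))ᗮ := fun p =>
      sub_mem (horth p) (Submodule.smul_mem _ _ (horth l))
    refine ⟨fun p => w p - (c p : ℂ) • w l, fun p => ?_, fun p => ?_, fun p q => ?_⟩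
    · have hwl : w l ∈ Submodule.span ℂ (v '' (insert l F : Finset ℕ)) := by
        simpa using sub_mem hvl (hmono (hsub l))
      have := add_mem (hmono (hsub p)) (Submodule.smul_mem _ (c p : ℂ) hwl)
      convert this using 1
      module
    · rw [Submodule.mem_orthogonal]
      intro y hy
      rw [Finset.coe_insert, Set.image_insert_eq, Submodule.mem_span_insert] at hy
      obtain ⟨a, z, hz, rfl⟩ := hy
      have h1 : inner ℂ (w l) (w p - (c p : ℂ) • w l) = 0 := by
        simp only [inner_sub_right, inner_smul_right, hgram, hc]
        push_cast
        have := hden l p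
        rw [← mul_two (l : ℂ), add_comm (p : ℂ) l]
        field_simp
        ring
      have h2 : inner ℂ (v l) (w p - (c p : ℂ) • w l) = 0 := by
        have := Submodule.inner_right_of_mem_orthogonal (hsub l) (horth' p)
        rwa [inner_sub_left, h1, sub_zero] at this
      rw [inner_add_left, inner_smul_left, h2,
        Submodule.inner_right_of_mem_orthogonal hz (horth' p)]
      simp
    · simp only [inner_sub_right, inner_smul_right, inner_sub_left, inner_smul_left, hgram, hc, hb,
        Complex.conj_ofReal]
      push_cast
      have := hden p q
      have := hden p l
      have := hden l q
      have := hden q l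
      simp only [← mul_two (l : ℂ)]
      field_simp
      ring

/-- The distance from `v p` to the span of the `v n`, `n ∈ F`, is `|blaschkeProd F p| / √(2p+1)`
and is attained. -/
lemma exists_residual_norm {v : ℕ → H}
    (hv : ∀ m n, inner ℂ (v m) (v n) = 1 / ((m : ℂ) + n + 1)) (F : Finset ℕ) (p : ℕ) :
    ∃ w : H, v p - w ∈ Submodule.span ℂ (v '' F) ∧
      (∀ y ∈ Submodule.span ℂ (v '' F), ‖w‖ ≤ ‖v p - y‖) ∧
      ‖w‖ = |blaschkeProd F p| / √(2 * p + 1) := by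
  obtain ⟨w, hsub, horth, hgram⟩ := exists_residual hv F
  refine ⟨w p, hsub p, fun y hy => ?_, ?_⟩
  · have h := norm_add_sq_eq_norm_sq_add_norm_sq_of_inner_eq_zero (𝕜 := ℂ) _ _
      (Submodule.inner_right_of_mem_orthogonal (sub_mem (hsub p) hy) (horth p))
    rw [show v p - w p - y + w p = v p - y by abel] at h
    exact abs_le_of_sq_le_sq' (by nlinarith [mul_self_nonneg ‖v p - w p - y‖]) (norm_nonneg _) |>.2
  · have h : ‖w p‖ ^ 2 = blaschkeProd F p ^ 2 / (2 * p + 1) := by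
      have := hgram p p
      rw [inner_self_eq_norm_sq_to_K] at this
      rw [sq (blaschkeProd F p), two_mul]
      apply Complex.ofReal_injective
      push_cast
      exact this
    rw [← Real.sqrt_sq (norm_nonneg (w p)), h, Real.sqrt_div (sq_nonneg _), Real.sqrt_sq_eq_abs]

end Hilbert

lemma blaschkeProd_abs (F : Finset ℕ) (p : ℕ) :
    |blaschkeProd F p| = ∏ n ∈ F, |(p : ℝ) - n| / (p + n + 1) := by
  rw [blaschkeProd, Finset.abs_prod]
  refine Finset.prod_congr rfl fun n _ => ?_
  rw [abs_div, abs_of_pos (by positivity : (0 : ℝ) < p + n + 1)]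

lemma blaschkeProd_abs_le {F : Finset ℕ} {p : ℕ} (hF : ∀ n ∈ F, p < n) :
    |blaschkeProd F p| ≤ Real.exp (-∑ n ∈ F, 1 / ((n : ℝ) + 1)) := by
  rw [blaschkeProd_abs, ← Finset.sum_neg_distrib, Real.exp_sum]
  refine Finset.prod_le_prod (fun n _ => by positivity) fun n hn => ?_
  have hpn : (p : ℝ) < n := by exact_mod_cast hF n hn
  refine le_trans ?_ (Real.add_one_le_exp _)
  rw [abs_of_neg (by linarith), div_le_iff₀ (by positivity)]
  have hp : (0 : ℝ) ≤ p := by positivity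
  have hn1 : (0 : ℝ) < (n : ℝ) + 1 := by positivity
  have : (-(1 / ((n : ℝ) + 1)) + 1) * (p + n + 1) = n * (p + n + 1) / (n + 1) := by
    field_simp
    ring
  rw [this, le_div_iff₀ hn1]
  nlinarith [mul_nonneg hp hn1.le]

lemma exp_le_blaschkeProd_abs {F : Finset ℕ} {p : ℕ} (hp : p ∉ F) :
    Real.exp (-((2 * p + 1) * (p + 2) * ∑ n ∈ F, 1 / ((n : ℝ) + 1))) ≤ |blaschkeProd F p| := by
  rw [blaschkeProd_abs, Finset.mul_sum, ← Finset.sum_neg_distrib, Real.exp_sum]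
  refine Finset.prod_le_prod (fun n _ => (Real.exp_pos _).le) fun n hn => ?_
  have hp0 : (0 : ℝ) ≤ p := by positivity
  have hn0 : (0 : ℝ) ≤ n := by positivity
  have hne : p ≠ n := fun h => hp (h ▸ hn)
  have hd : (n : ℝ) + 1 ≤ |(p : ℝ) - n| * (p + 2) ∧ (p : ℝ) + n + 1 - |(p : ℝ) - n| ≤ 2 * p + 1 ∧
      1 ≤ |(p : ℝ) - n| := by
    rcases lt_or_gt_of_ne hne with h | h
    · have h' : (p : ℝ) + 1 ≤ n := by exact_mod_cast h
      rw [abs_of_neg (by linarith)]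
      exact ⟨by nlinarith, by linarith, by linarith⟩
    · have h' : (n : ℝ) + 1 ≤ p := by exact_mod_cast h
      rw [abs_of_pos (by linarith)]
      exact ⟨by nlinarith, by linarith, by linarith⟩
  obtain ⟨h1, h2, h3⟩ := hd
  set d := |(p : ℝ) - n|
  rw [Real.exp_neg, ← inv_div ((p : ℝ) + n + 1) d]
  gcongr
  refine le_trans ?_ (Real.add_one_le_exp _)
  have hn1 : (0 : ℝ) < (n : ℝ) + 1 := by positivity
  have hd0 : 0 < d := by linarith
  rw [mul_one_div, div_add_one hn1.ne', div_le_div_iff₀ hd0 hn1]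
  nlinarith [mul_le_mul_of_nonneg_left h1 (by positivity : (0 : ℝ) ≤ 2 * p + 1),
    mul_le_mul_of_nonneg_right h2 hn1.le]

section Hilbert

variable {H : Type*} [NormedAddCommGroup H] [InnerProductSpace ℂ H]

lemma mem_closure_span_of_not_summable {v : ℕ → H}
    (hv : ∀ m n, inner ℂ (v m) (v n) = 1 / ((m : ℂ) + n + 1)) {S : Set ℕ}
    (hS : ¬ Summable (S.indicator fun n : ℕ => 1 / ((n : ℝ) + 1))) (p : ℕ) :
    v p ∈ closure (Submodule.span ℂ (v '' S) : Set H) := by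
  classical
  set g : ℕ → ℝ := (S ∩ Set.Ioi p).indicator fun n : ℕ => 1 / ((n : ℝ) + 1) with hg
  have hgS : ¬ Summable g := by
    refine fun h => hS ((summable_congr_cofinite ?_).1 h)
    rw [Nat.cofinite_eq_atTop]
    filter_upwards [eventually_gt_atTop p] with n hn
    by_cases h : n ∈ S <;> simp [g, h, hn]
  have hg0 : ∀ n, 0 ≤ g n := Set.indicator_nonneg fun n _ => by positivity
  have hlim := (not_summable_iff_tendsto_nat_atTop_of_nonneg hg0).1 hgS
  rw [Metric.mem_closure_iff]
  intro ε hε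
  have hexp := (Real.tendsto_exp_neg_atTop_nhds_zero.comp hlim).eventually_lt_const hε
  obtain ⟨N, hN⟩ := hexp.exists
  set F := (Finset.range N).filter (· ∈ S ∩ Set.Ioi p) with hF
  obtain ⟨w, hw, -, hnorm⟩ := exists_residual_norm hv F p
  refine ⟨v p - w, Submodule.span_mono (Set.image_mono fun n hn => ?_) hw, ?_⟩
  · simp only [hF, Finset.coe_filter] at hn
    exact hn.2.1
  · rw [dist_eq_norm, sub_sub_cancel, hnorm]
    calc |blaschkeProd F p| / √(2 * p + 1) ≤ |blaschkeProd F p| :=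
          div_le_self (abs_nonneg _) (Real.one_le_sqrt.2 (by linarith [p.cast_nonneg (α := ℝ)]))
      _ ≤ Real.exp (-∑ n ∈ F, 1 / ((n : ℝ) + 1)) :=
          blaschkeProd_abs_le fun n hn => (Finset.mem_filter.1 hn).2.2
      _ = Real.exp (-∑ n ∈ Finset.range N, g n) := by
          rw [hF, Finset.sum_filter]
          simp only [hg, Set.indicator_apply]
      _ < ε := hN

lemma notMem_closure_span_of_summable {v : ℕ → H}
    (hv : ∀ m n, inner ℂ (v m) (v n) = 1 / ((m : ℂ) + n + 1)) {S : Set ℕ}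
    (hS : Summable (S.indicator fun n : ℕ => 1 / ((n : ℝ) + 1))) {p : ℕ} (hp : p ∉ S) :
    v p ∉ closure (Submodule.span ℂ (v '' S) : Set H) := by
  set g := S.indicator fun n : ℕ => 1 / ((n : ℝ) + 1)
  set δ := Real.exp (-((2 * p + 1) * (p + 2) * ∑' n, g n)) / √(2 * p + 1)
  have hδ : 0 < δ := by positivity
  rw [Metric.mem_closure_iff]
  push Not
  refine ⟨δ, hδ, fun y hy => ?_⟩
  obtain ⟨F, hFS, c, rfl⟩ := (Submodule.mem_span_image_iff_exists_fun ℂ).1 hy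
  obtain ⟨w, -, hmin, hnorm⟩ := exists_residual_norm hv F p
  rw [dist_eq_norm]
  refine le_trans ?_ (hmin _ <| Submodule.sum_mem _ fun i _ =>
    Submodule.smul_mem _ _ (Submodule.subset_span ⟨i, i.2, rfl⟩))
  rw [hnorm]
  simp only [δ]
  gcongr
  refine le_trans ?_ (exp_le_blaschkeProd_abs fun h => hp (hFS h))
  gcongr
  calc ∑ n ∈ F, 1 / ((n : ℝ) + 1) = ∑ n ∈ F, g n :=
        Finset.sum_congr rfl fun n hn =>
          (Set.indicator_of_mem (hFS hn) fun n : ℕ => 1 / ((n : ℝ) + 1)).symm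
    _ ≤ ∑' n, g n := hS.sum_le_tsum _ fun n _ => Set.indicator_nonneg (fun n _ => by positivity) n

end Hilbert

instance : IsProbabilityMeasure mu01 := ⟨by simp [mu01]⟩

lemma inner_monomial {mono : ℕ → Lp ℂ 2 mu01}
    (hmono : ∀ n : ℕ, (mono n : ℝ → ℂ) =ᵐ[mu01] fun x => (x : ℂ) ^ n) (m n : ℕ) :
    inner ℂ (mono m) (mono n) = 1 / ((m : ℂ) + n + 1) := by
  have h : ∀ᵐ x ∂mu01, inner ℂ (mono m x) (mono n x) = ((x ^ (m + n) : ℝ) : ℂ) := by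
    filter_upwards [hmono m, hmono n] with x h1 h2
    rw [h1, h2, RCLike.inner_apply', map_pow, Complex.conj_ofReal, pow_add]
    push_cast
    rfl
  rw [L2.inner_def, integral_congr_ae h, integral_complex_ofReal, mu01, integral_Icc_eq_integral_Ioc,
    ← intervalIntegral.integral_of_le zero_le_one, integral_pow]
  simp

lemma exists_mem_span_ae_eq_eval {mono : ℕ → Lp ℂ 2 mu01}
    (hmono : ∀ n : ℕ, (mono n : ℝ → ℂ) =ᵐ[mu01] fun x => (x : ℂ) ^ n) (P : Polynomial ℝ) :
    ∃ u ∈ Submodule.span ℂ (Set.range mono), (u : ℝ → ℂ) =ᵐ[mu01] fun x => ((P.eval x : ℝ) : ℂ) := by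
  induction P using Polynomial.induction_on' with
  | add P Q hP hQ =>
    obtain ⟨u, hu, hu'⟩ := hP
    obtain ⟨v, hv, hv'⟩ := hQ
    refine ⟨u + v, add_mem hu hv, ?_⟩
    filter_upwards [Lp.coeFn_add u v, hu', hv'] with x h1 h2 h3
    rw [h1, Pi.add_apply, h2, h3]
    simp
  | monomial n a =>
    refine ⟨(a : ℂ) • mono n, Submodule.smul_mem _ _ (Submodule.subset_span ⟨n, rfl⟩), ?_⟩
    filter_upwards [Lp.coeFn_smul (a : ℂ) (mono n), hmono n] with x h1 h2
    rw [h1, Pi.smul_apply, h2]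
    simp

lemma dense_span_range_monomial {mono : ℕ → Lp ℂ 2 mu01}
    (hmono : ∀ n : ℕ, (mono n : ℝ → ℂ) =ᵐ[mu01] fun x => (x : ℂ) ^ n) :
    Dense (Submodule.span ℂ (Set.range mono) : Set (Lp ℂ 2 mu01)) := by
  have hd := BoundedContinuousFunction.toLp_denseRange (p := 2) ℂ mu01 ℂ (by simp)
  rw [← dense_closure]
  refine hd.mono ?_
  rintro _ ⟨f, rfl⟩
  rw [Metric.mem_closure_iff]
  intro ε hε
  obtain ⟨P, hP⟩ := exists_polynomial_near_of_continuousOn 0 1 (fun x => (f x).re)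
    (by fun_prop) (ε / 3) (by positivity)
  obtain ⟨Q, hQ⟩ := exists_polynomial_near_of_continuousOn 0 1 (fun x => (f x).im)
    (by fun_prop) (ε / 3) (by positivity)
  obtain ⟨u, hu, hu'⟩ := exists_mem_span_ae_eq_eval hmono P
  obtain ⟨v, hv, hv'⟩ := exists_mem_span_ae_eq_eval hmono Q
  refine ⟨u + Complex.I • v, add_mem hu (Submodule.smul_mem _ _ hv), ?_⟩
  rw [dist_eq_norm']
  have hmem : ∀ᵐ x ∂mu01, x ∈ Set.Icc (0 : ℝ) 1 := ae_restrict_mem measurableSet_Icc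
  have hle := Lp.norm_le_of_ae_bound (C := ε / 3 + ε / 3)
    (f := u + Complex.I • v - BoundedContinuousFunction.toLp 2 mu01 ℂ f) (by positivity) (by
      filter_upwards [hmem, hu', hv', Lp.coeFn_sub (u + Complex.I • v)
        (BoundedContinuousFunction.toLp 2 mu01 ℂ f), Lp.coeFn_add u (Complex.I • v),
        Lp.coeFn_smul Complex.I v, BoundedContinuousFunction.coeFn_toLp 2 mu01 ℂ f]
        with x hx h1 h2 h3 h4 h5 h6
      rw [h3, Pi.sub_apply, h4, Pi.add_apply, h5, Pi.smul_apply, h1, h2, h6]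
      refine (Complex.norm_le_abs_re_add_abs_im _).trans ?_
      have hP' := (hP x hx).le
      have hQ' := (hQ x hx).le
      simpa using add_le_add hP' hQ')
  have hone : measureUnivNNReal mu01 = 1 := by simp [measureUnivNNReal]
  rw [hone] at hle
  simp only [NNReal.coe_one, Real.one_rpow, one_mul] at hle
  linarith

lemma tsum_eq_top_iff_not_summable (S : Set ℕ) :
    ∑' n : S, (1 : ENNReal) / ((n : ℕ) + 1) = ⊤ ↔
      ¬ Summable (S.indicator fun n : ℕ => 1 / ((n : ℝ) + 1)) := by
  rw [← summable_subtype_iff_indicator, ← not_iff_not, not_not, ← Ne]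
  have h : ∀ n : S, (1 : ENNReal) / ((n : ℕ) + 1) = ((1 / ((n : ℕ) + 1) : NNReal) : ENNReal) := by
    intro n
    rw [ENNReal.coe_div (by positivity)]
    simp
  simp_rw [h]
  rw [ENNReal.tsum_coe_ne_top_iff_summable, ← NNReal.summable_coe]
  refine summable_congr fun n => ?_
  simp

/-- **Müntz–Szász theorem, `L²` case.** Let `S ⊆ ℕ` and let `mono n ∈ L²[0,1]`
represent the monomial `xⁿ`.  The linear span of `{xⁿ : n ∈ S}` is dense in
`L²[0,1]` if and only if `∑_{n ∈ S} 1/(n+1) = ∞`. -/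
theorem muntz_szasz_L2 (S : Set ℕ) (mono : ℕ → Lp ℂ 2 mu01)
    (hmono : ∀ n : ℕ, (mono n : ℝ → ℂ) =ᵐ[mu01] fun x => (x : ℂ) ^ n) :
    Dense (Submodule.span ℂ (mono '' S) : Set (Lp ℂ 2 mu01)) ↔
      ∑' n : S, (1 : ENNReal) / ((n : ℕ) + 1) = ⊤ := by
  rw [tsum_eq_top_iff_not_summable]
  have hv := inner_monomial hmono
  constructor
  · intro hd hS
    obtain ⟨p, hp⟩ : ∃ p, p ∉ S := by
      by_contra! h
      rw [Set.eq_univ_of_forall h, Set.indicator_univ] at hS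
      refine Real.not_summable_one_div_natCast ((summable_nat_add_iff 1).1 ?_)
      simpa using hS
    exact notMem_closure_span_of_summable hv hS hp (hd _)
  · intro hS
    rw [← dense_closure, ← Submodule.topologicalClosure_coe]
    refine (dense_span_range_monomial hmono).mono (Submodule.span_le.2 ?_)
    rintro _ ⟨p, rfl⟩
    exact mem_closure_span_of_not_summable hv hS p
end

section
/- Let {N_n} be an increasing sequence of natural numbers, let 𝓜_n = span{xⁿ, x^{n+1}, …, x^{n+N_n}} ⊆ L²[0,1], and let 𝓜_∞ = { f ∈ L²[0,1] : dist(f, 𝓜_n) → 0 as n → ∞ }. Then there exists s ∈ [0,1] such that 𝓜_∞ = L²[s,1]. -/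
open MeasureTheory Filter Topology

/-- The space `𝓜_n = span{xⁿ, …, x^{n+N_n}}` in `L²[0,1]`, where `mono k`
represents the monomial `xᵏ`. -/
noncomputable def Mn (N : ℕ → ℕ) (mono : ℕ → Lp ℂ 2 mu01) (n : ℕ) :
    Submodule ℂ (Lp ℂ 2 mu01) :=
  Submodule.span ℂ (mono '' Set.Icc n (n + N n))

/-- The space `𝓜_∞` of `f ∈ L²[0,1]` with `dist(f, 𝓜_n) → 0`. -/
noncomputable def Minf (N : ℕ → ℕ) (mono : ℕ → Lp ℂ 2 mu01) : Set (Lp ℂ 2 mu01) :=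
  {f | Tendsto (fun n => Metric.infDist f (Mn N mono n : Set (Lp ℂ 2 mu01)))
    atTop (𝓝 0)}

open scoped InnerProductSpace

instance : IsFiniteMeasure mu01 := by
  unfold mu01; infer_instance

/-- The map `x ↦ c x` contracts `[0,1]`, so it changes the measure by a factor at most `c⁻¹`. -/
lemma map_mul_left_mu01_le {c : ℝ} (hc : 0 < c) (hc1 : c ≤ 1) :
    mu01.map (c * ·) ≤ ENNReal.ofReal c⁻¹ • mu01 := by
  refine Measure.le_iff.2 fun s hs => ?_
  have hm : Measurable (c * · : ℝ → ℝ) := measurable_const_mul c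
  rw [Measure.map_apply hm hs, Measure.smul_apply, smul_eq_mul, mu01,
    Measure.restrict_apply (hm hs), Measure.restrict_apply hs]
  calc volume ((c * ·) ⁻¹' s ∩ Set.Icc 0 1)
      ≤ volume ((c * ·) ⁻¹' (s ∩ Set.Icc 0 1)) := by
        refine measure_mono fun x hx => ⟨hx.1, ?_, ?_⟩
        · exact mul_nonneg hc.le hx.2.1
        · exact mul_le_one₀ hc1 hx.2.1 hx.2.2
    _ = ENNReal.ofReal c⁻¹ * volume (s ∩ Set.Icc 0 1) := by
        rw [Real.volume_preimage_mul_left hc.ne', abs_of_pos (inv_pos.2 hc)]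

lemma quasiMeasurePreserving_mul_left_mu01 {c : ℝ} (hc : 0 < c) (hc1 : c ≤ 1) :
    Measure.QuasiMeasurePreserving (c * ·) mu01 mu01 :=
  ⟨measurable_const_mul c,
    Measure.absolutelyContinuous_of_le_smul (map_mul_left_mu01_le hc hc1)⟩

lemma ae_mu01_mem_Icc : ∀ᵐ x ∂mu01, x ∈ Set.Icc (0 : ℝ) 1 :=
  ae_restrict_mem measurableSet_Icc

lemma eLpNorm_pow_mul_comp_mul_left_le {c : ℝ} (hc : 0 < c) (hc1 : c ≤ 1) (j : ℕ) {f : ℝ → ℂ}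
    (hf : MemLp f 2 mu01) :
    eLpNorm (fun x : ℝ => (x : ℂ) ^ j * f (c * x)) 2 mu01 ≤
      ENNReal.ofReal c⁻¹ ^ (1 / 2 : ENNReal).toReal * eLpNorm f 2 mu01 := by
  have hle := map_mul_left_mu01_le hc hc1
  calc eLpNorm (fun x : ℝ => (x : ℂ) ^ j * f (c * x)) 2 mu01
      ≤ eLpNorm (f ∘ (c * ·)) 2 mu01 := by
        refine eLpNorm_mono_ae ?_
        filter_upwards [ae_mu01_mem_Icc] with x hx
        rw [norm_mul, norm_pow, Complex.norm_real, Real.norm_of_nonneg hx.1]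
        exact mul_le_of_le_one_left (norm_nonneg _) (pow_le_one₀ hx.1 hx.2)
    _ = eLpNorm f 2 (mu01.map (c * ·)) :=
        (eLpNorm_map_measure (hf.of_measure_le_smul ENNReal.ofReal_ne_top hle).1
          (measurable_const_mul c).aemeasurable).symm
    _ ≤ eLpNorm f 2 (ENNReal.ofReal c⁻¹ • mu01) := eLpNorm_mono_measure f hle
    _ = _ := by
        rw [eLpNorm_smul_measure_of_ne_top (by simp), smul_eq_mul]

lemma memLp_pow_mul_comp_mul_left {c : ℝ} (hc : 0 < c) (hc1 : c ≤ 1) (j : ℕ) {f : ℝ → ℂ}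
    (hf : MemLp f 2 mu01) : MemLp (fun x : ℝ => (x : ℂ) ^ j * f (c * x)) 2 mu01 := by
  refine ⟨?_, (eLpNorm_pow_mul_comp_mul_left_le hc hc1 j hf).trans_lt ?_⟩
  · exact (by fun_prop : Continuous fun x : ℝ => (x : ℂ) ^ j).aestronglyMeasurable.mul
      (hf.1.comp_quasiMeasurePreserving (quasiMeasurePreserving_mul_left_mu01 hc hc1))
  · exact ENNReal.mul_lt_top
      (ENNReal.rpow_lt_top_of_nonneg ENNReal.toReal_nonneg ENNReal.ofReal_ne_top) hf.2

/-- The operator `f ↦ xʲ f(c x)` is bounded on `L²[0,1]`. -/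
lemma exists_clm_pow_mul_comp_mul_left {c : ℝ} (hc : 0 < c) (hc1 : c ≤ 1) (j : ℕ) :
    ∃ T : Lp ℂ 2 mu01 →L[ℂ] Lp ℂ 2 mu01,
      ∀ f, T f =ᵐ[mu01] fun x : ℝ => (x : ℂ) ^ j * f (c * x) := by
  have hq := quasiMeasurePreserving_mul_left_mu01 hc hc1
  have hm := fun f : Lp ℂ 2 mu01 => memLp_pow_mul_comp_mul_left hc hc1 j (Lp.memLp f)
  let L : Lp ℂ 2 mu01 →ₗ[ℂ] Lp ℂ 2 mu01 :=
    { toFun := fun f => (hm f).toLp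
      map_add' := fun f g => by
        refine Lp.ext ?_
        filter_upwards [(hm (f + g)).coeFn_toLp, (hm f).coeFn_toLp, (hm g).coeFn_toLp,
          Lp.coeFn_add (hm f).toLp (hm g).toLp, hq.ae (Lp.coeFn_add f g)] with x h1 h2 h3 h4 h5
        rw [h1, h4, Pi.add_apply, h2, h3, h5, Pi.add_apply, mul_add]
      map_smul' := fun a f => by
        refine Lp.ext ?_
        filter_upwards [(hm (a • f)).coeFn_toLp, (hm f).coeFn_toLp,
          Lp.coeFn_smul a (hm f).toLp, hq.ae (Lp.coeFn_smul a f)] with x h1 h2 h3 h4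
        rw [h1, RingHom.id_apply, h3, Pi.smul_apply, h2, h4, Pi.smul_apply, smul_eq_mul,
          smul_eq_mul, mul_left_comm] }
  refine ⟨L.mkContinuous (ENNReal.ofReal c⁻¹ ^ (1 / 2 : ENNReal).toReal).toReal fun f => ?_,
    fun f => (hm f).coeFn_toLp⟩
  change ‖(hm f).toLp‖ ≤ _
  rw [Lp.norm_toLp, Lp.norm_def, ← ENNReal.toReal_mul]
  refine ENNReal.toReal_mono ?_ (eLpNorm_pow_mul_comp_mul_left_le hc hc1 j (Lp.memLp f))
  exact (ENNReal.mul_lt_top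
    (ENNReal.rpow_lt_top_of_nonneg ENNReal.toReal_nonneg ENNReal.ofReal_ne_top)
    (Lp.memLp f).2).ne

lemma infDist_map_le {E : Type*} [NormedAddCommGroup E] [NormedSpace ℂ E] (T : E →L[ℂ] E)
    {S S' : Submodule ℂ E} (h : S ≤ S'.comap T.toLinearMap) (f : E) :
    Metric.infDist (T f) S' ≤ ‖T‖ * Metric.infDist f S := by
  rw [Metric.infDist_eq_iInf (x := f), Real.mul_iInf_of_nonneg (norm_nonneg _)]
  have : Nonempty (S : Set E) := ⟨⟨0, S.zero_mem⟩⟩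
  refine le_ciInf fun p => ?_
  calc Metric.infDist (T f) S' ≤ dist (T f) (T p) := Metric.infDist_le_dist_of_mem (h p.2)
    _ ≤ ‖T‖ * dist f p := by rw [dist_eq_norm, dist_eq_norm, ← map_sub]; exact T.le_opNorm _

lemma infDist_add_le {E : Type*} [NormedAddCommGroup E] [NormedSpace ℂ E]
    (S : Submodule ℂ E) (f g : E) :
    Metric.infDist (f + g) S ≤ Metric.infDist f S + Metric.infDist g S := by
  have := norm_add_le (QuotientAddGroup.mk f : E ⧸ S.toAddSubgroup) (QuotientAddGroup.mk g)
  rwa [← QuotientAddGroup.mk_add, QuotientAddGroup.norm_mk, QuotientAddGroup.norm_mk,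
    QuotientAddGroup.norm_mk] at this

lemma map_mem_Minf {N : ℕ → ℕ} {mono : ℕ → Lp ℂ 2 mu01} (T : Lp ℂ 2 mu01 →L[ℂ] Lp ℂ 2 mu01)
    (j : ℕ) (h : ∀ n, Mn N mono n ≤ (Mn N mono (n + j)).comap T.toLinearMap)
    {f : Lp ℂ 2 mu01} (hf : f ∈ Minf N mono) : T f ∈ Minf N mono := by
  refine (tendsto_add_atTop_iff_nat j).1 ?_
  refine squeeze_zero (fun _ => Metric.infDist_nonneg) (fun n => infDist_map_le T (h n) f) ?_
  simpa using hf.const_mul ‖T‖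

/-- `𝓜_∞` as a subspace of `L²[0,1]`. -/
noncomputable def MinfSubmodule (N : ℕ → ℕ) (mono : ℕ → Lp ℂ 2 mu01) :
    Submodule ℂ (Lp ℂ 2 mu01) where
  carrier := Minf N mono
  add_mem' {f g} hf hg :=
    squeeze_zero (fun _ => Metric.infDist_nonneg) (fun n => infDist_add_le _ f g)
      (by simpa using hf.add hg)
  zero_mem' := by
    have h (n : ℕ) : Metric.infDist 0 (Mn N mono n : Set (Lp ℂ 2 mu01)) = 0 :=
      Metric.infDist_zero_of_mem (Submodule.zero_mem _)
    simp [Minf, h]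
  smul_mem' a f hf :=
    map_mem_Minf (a • ContinuousLinearMap.id ℂ (Lp ℂ 2 mu01)) 0
      (fun n _ hp => (Mn N mono n).smul_mem a hp) hf

lemma isClosed_Minf (N : ℕ → ℕ) (mono : ℕ → Lp ℂ 2 mu01) : IsClosed (Minf N mono) := by
  refine isClosed_of_closure_subset fun f hf => ?_
  rw [Minf, Set.mem_ofPred_eq, Metric.tendsto_atTop]
  intro ε hε
  obtain ⟨g, hg, hfg⟩ := Metric.mem_closure_iff.1 hf (ε / 2) (half_pos hε)
  obtain ⟨n₀, hn₀⟩ := Metric.tendsto_atTop.1 hg (ε / 2) (half_pos hε)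
  refine ⟨n₀, fun n hn => ?_⟩
  have h := hn₀ n hn
  rw [Real.dist_0_eq_abs, abs_of_nonneg Metric.infDist_nonneg] at h ⊢
  linarith [Metric.infDist_le_infDist_add_dist
    (s := (Mn N mono n : Set (Lp ℂ 2 mu01))) (x := f) (y := g)]

/-- The operator `f ↦ xʲ f(c x)` leaves `𝓜_∞` invariant. -/
lemma exists_mem_Minf_pow_mul_comp_mul_left {N : ℕ → ℕ} (hN : Monotone N)
    {mono : ℕ → Lp ℂ 2 mu01}
    (hmono : ∀ k : ℕ, (mono k : ℝ → ℂ) =ᵐ[mu01] fun x => (x : ℂ) ^ k)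
    {c : ℝ} (hc : 0 < c) (hc1 : c ≤ 1) (j : ℕ) {f : Lp ℂ 2 mu01} (hf : f ∈ Minf N mono) :
    ∃ g ∈ Minf N mono, g =ᵐ[mu01] fun x : ℝ => (x : ℂ) ^ j * f (c * x) := by
  obtain ⟨T, hT⟩ := exists_clm_pow_mul_comp_mul_left hc hc1 j
  refine ⟨T f, map_mem_Minf T j (fun n => ?_) hf, hT f⟩
  rw [Mn, Submodule.span_le]
  rintro _ ⟨k, hk, rfl⟩
  have hk' : T (mono k) = (c : ℂ) ^ k • mono (k + j) := by
    refine Lp.ext ?_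
    filter_upwards [hT (mono k), Lp.coeFn_smul ((c : ℂ) ^ k) (mono (k + j)), hmono (k + j),
      (quasiMeasurePreserving_mul_left_mu01 hc hc1).ae (hmono k)] with x h1 h2 h3 h4
    rw [h1, h2, h4, Pi.smul_apply, h3, smul_eq_mul]
    push_cast
    ring
  change T (mono k) ∈ Mn N mono (n + j)
  rw [hk']
  refine Submodule.smul_mem _ _ (Submodule.subset_span ⟨k + j, ?_, rfl⟩)
  have := hN (Nat.le_add_right n j)
  exact ⟨by have := hk.1; omega, by have := hk.2; omega⟩

/-- An integrable function on `[0,1]` with vanishing moments is zero. -/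
lemma ae_eq_zero_of_moments_eq_zero {F : ℝ → ℂ} (hF : Integrable F mu01)
    (h : ∀ j : ℕ, ∫ x, (x : ℂ) ^ j * F x ∂mu01 = 0) : ∀ᵐ x ∂mu01, F x = 0 := by
  have hint (g : ℝ → ℝ) (hg : Continuous g) : Integrable (fun x => g x • F x) mu01 :=
    IntegrableOn.continuousOn_smul hF hg.continuousOn isCompact_Icc
  have hpoly (p : Polynomial ℝ) : ∫ x, p.eval x • F x ∂mu01 = 0 := by
    have hi (i : ℕ) : Integrable (fun x => (p.coeff i * x ^ i) • F x) mu01 :=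
      hint _ (by fun_prop)
    simp_rw [Polynomial.eval_eq_sum_range, Finset.sum_smul]
    rw [integral_finsetSum _ fun i _ => hi i]
    refine Finset.sum_eq_zero fun i _ => ?_
    simp_rw [mul_smul]
    rw [integral_smul]
    have := h i
    simp_rw [Complex.real_smul]
    push_cast
    rw [this, mul_zero]
  refine ae_eq_zero_of_integral_contDiff_smul_eq_zero hF.locallyIntegrable fun g hg _ => ?_
  rw [← norm_le_zero_iff]
  refine le_of_forall_pos_le_add fun ε hε => ?_
  have hC : 0 ≤ ∫ x, ‖F x‖ ∂mu01 := integral_nonneg fun _ => norm_nonneg _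
  set C := ∫ x, ‖F x‖ ∂mu01 with hCdef
  obtain ⟨p, hp⟩ := exists_polynomial_near_of_continuousOn 0 1 g hg.continuous.continuousOn
    (ε / (C + 1)) (by positivity)
  calc ‖∫ x, g x • F x ∂mu01‖
      = ‖∫ x, (g x • F x - p.eval x • F x) ∂mu01‖ := by
        rw [integral_sub (hint g hg.continuous) (hint _ p.continuous), hpoly, sub_zero]
    _ ≤ ∫ x, ε / (C + 1) * ‖F x‖ ∂mu01 := by
        refine norm_integral_le_of_norm_le (hF.norm.const_mul _) ?_
        filter_upwards [ae_mu01_mem_Icc] with x hx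
        rw [← sub_smul, norm_smul, Real.norm_eq_abs, abs_sub_comm]
        exact mul_le_mul_of_nonneg_right (hp x hx).le (norm_nonneg _)
    _ = ε * (C / (C + 1)) := by rw [integral_const_mul, ← hCdef]; ring
    _ ≤ 0 + ε := by
        rw [zero_add]
        exact mul_le_of_le_one_right hε.le ((div_le_one (by positivity)).2 (by linarith))

/-- If `g ⟂ 𝓜_∞` and `f ∈ 𝓜_∞`, then every dilate of `f` vanishes where `g` does not. -/
lemma ae_comp_mul_left_eq_zero_or {N : ℕ → ℕ} (hN : Monotone N) {mono : ℕ → Lp ℂ 2 mu01}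
    (hmono : ∀ k : ℕ, (mono k : ℝ → ℂ) =ᵐ[mu01] fun x => (x : ℂ) ^ k)
    {f g : Lp ℂ 2 mu01} (hf : f ∈ Minf N mono) (hg : g ∈ (MinfSubmodule N mono)ᗮ)
    {c : ℝ} (hc : 0 < c) (hc1 : c ≤ 1) :
    ∀ᵐ x ∂mu01, f (c * x) = 0 ∨ g x = 0 := by
  have hI (j : ℕ) : ∃ u : Lp ℂ 2 mu01, ⟪g, u⟫_ℂ = 0 ∧
      (fun x => ⟪g x, u x⟫_ℂ) =ᵐ[mu01] fun x => (x : ℂ) ^ j * ⟪g x, f (c * x)⟫_ℂ := by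
    obtain ⟨u, hu, hux⟩ := exists_mem_Minf_pow_mul_comp_mul_left hN hmono hc hc1 j hf
    refine ⟨u, Submodule.inner_left_of_mem_orthogonal (K := MinfSubmodule N mono) hu hg, ?_⟩
    filter_upwards [hux] with x hx
    rw [hx, ← smul_eq_mul, inner_smul_right]
  have h0 := ae_eq_zero_of_moments_eq_zero (F := fun x => ⟪g x, f (c * x)⟫_ℂ) ?_ fun j => ?_
  · filter_upwards [h0] with x hx
    simpa [or_comm] using hx
  · obtain ⟨u, -, hu⟩ := hI 0
    exact (L2.integrable_inner (𝕜 := ℂ) g u).congr (by simpa using hu)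
  · obtain ⟨u, hu0, hu⟩ := hI j
    rw [← integral_congr_ae hu, ← hu0, L2.inner_def]

/-- If `g ⟂ 𝓜_∞` and `f ∈ 𝓜_∞`, then `f` vanishes on `[0,x]` for almost every `x` with
`g x ≠ 0`. -/
lemma ae_eq_zero_or_ae_eq_zero_on_Icc {N : ℕ → ℕ} (hN : Monotone N) {mono : ℕ → Lp ℂ 2 mu01}
    (hmono : ∀ k : ℕ, (mono k : ℝ → ℂ) =ᵐ[mu01] fun x => (x : ℂ) ^ k)
    {f g : Lp ℂ 2 mu01} (hf : f ∈ Minf N mono) (hg : g ∈ (MinfSubmodule N mono)ᗮ) :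
    ∀ᵐ x ∂mu01, g x = 0 ∨ ∀ᵐ y ∂mu01, y ∈ Set.Icc 0 x → f y = 0 := by
  have hne : ∀ᵐ x ∂mu01, x ≠ 0 := ae_restrict_of_ae (Measure.ae_ne volume 0)
  have hfm : Measurable f := (Lp.stronglyMeasurable f).measurable
  have hgm : Measurable g := (Lp.stronglyMeasurable g).measurable
  have hmeas : MeasurableSet {p : ℝ × ℝ | f (p.1 * p.2) = 0 ∨ g p.2 = 0} :=
    (measurableSet_eq_fun (hfm.comp measurable_mul) measurable_const).union
      (measurableSet_eq_fun (hgm.comp measurable_snd) measurable_const)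
  have h1 : ∀ᵐ c ∂mu01, ∀ᵐ x ∂mu01, f (c * x) = 0 ∨ g x = 0 := by
    filter_upwards [ae_mu01_mem_Icc, hne] with c hc hc0
    exact ae_comp_mul_left_eq_zero_or hN hmono hf hg (lt_of_le_of_ne hc.1 (Ne.symm hc0)) hc.2
  filter_upwards [(Measure.ae_ae_comm (p := fun c x => f (c * x) = 0 ∨ g x = 0) hmeas).1 h1,
    ae_mu01_mem_Icc, hne] with x hx hx01 hx0
  refine or_iff_not_imp_left.2 fun hgx => ?_
  have hxpos : 0 < x := lt_of_le_of_ne hx01.1 (Ne.symm hx0)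
  have h2 : ∀ᵐ c : ℝ, c ∈ Set.Icc (0 : ℝ) 1 → f (c * x) = 0 :=
    (ae_restrict_iff' measurableSet_Icc).1 (hx.mono fun c hc => hc.resolve_right hgx)
  have hq : Measure.QuasiMeasurePreserving (x⁻¹ * · : ℝ → ℝ) volume volume := by
    refine ⟨measurable_const_mul _, ?_⟩
    rw [Real.map_volume_mul_left (inv_ne_zero hx0)]
    exact Measure.smul_absolutelyContinuous
  refine ae_restrict_of_ae ?_
  filter_upwards [hq.ae h2] with y hy hyx
  have := hy ⟨mul_nonneg (inv_nonneg.2 hx01.1) hyx.1, by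
    rw [inv_mul_le_iff₀ hxpos, mul_one]; exact hyx.2⟩
  rwa [mul_comm, mul_inv_cancel_left₀ hx0] at this

/-- If `{N_n}` is an increasing sequence of natural numbers,
`𝓜_n = span{xⁿ, …, x^{n+N_n}} ⊆ L²[0,1]` and
`𝓜_∞ = {f : dist(f, 𝓜_n) → 0}`, then `𝓜_∞ = L²[s,1]` (the functions vanishing
a.e. on `[0,s]`) for some `s ∈ [0,1]`. -/
theorem Minf_eq_L2s (N : ℕ → ℕ) (hN : StrictMono N)
    (mono : ℕ → Lp ℂ 2 mu01)
    (hmono : ∀ k : ℕ, (mono k : ℝ → ℂ) =ᵐ[mu01] fun x => (x : ℂ) ^ k) :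
    ∃ s ∈ Set.Icc (0 : ℝ) 1,
      Minf N mono =
        {f : Lp ℂ 2 mu01 | ∀ᵐ x ∂mu01, x ∈ Set.Icc 0 s → f x = 0} := by
  set K := MinfSubmodule N mono
  have : CompleteSpace K := (isClosed_Minf N mono).completeSpace_coe
  let A : Set ℝ := {x | x ∈ Set.Icc (0 : ℝ) 1 ∧
    ∀ f ∈ Minf N mono, ∀ᵐ y ∂mu01, y ∈ Set.Icc 0 x → f y = 0}
  have hne (a : ℝ) : ∀ᵐ x ∂mu01, x ≠ a := ae_restrict_of_ae (Measure.ae_ne volume a)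
  have hA0 : (0 : ℝ) ∈ A := by
    refine ⟨by simp, fun f _ => ?_⟩
    filter_upwards [hne 0] with y hy hy0
    exact absurd (le_antisymm hy0.2 hy0.1) hy
  have hAb : BddAbove A := ⟨1, fun x hx => hx.1.2⟩
  refine ⟨sSup A, ⟨le_csSup hAb hA0, csSup_le ⟨0, hA0⟩ fun x hx => hx.1.2⟩, ?_⟩
  ext f
  refine ⟨fun hf => ?_, fun hf => ?_⟩
  · have h : ∀ᵐ y ∂mu01, ∀ q : ℚ, (q : ℝ) < sSup A → y ∈ Set.Icc (0 : ℝ) q → f y = 0 := by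
      refine ae_all_iff.2 fun q => ?_
      by_cases hq : (q : ℝ) < sSup A
      · obtain ⟨a, ha, hqa⟩ := exists_lt_of_lt_csSup ⟨0, hA0⟩ hq
        filter_upwards [ha.2 f hf] with y hy _ hyq
        exact hy ⟨hyq.1, hyq.2.trans hqa.le⟩
      · exact Eventually.of_forall fun _ h => absurd h hq
    change ∀ᵐ y ∂mu01, y ∈ Set.Icc 0 (sSup A) → f y = 0
    filter_upwards [h, hne (sSup A)] with y hy hys hy0
    obtain ⟨q, hyq, hq⟩ := exists_rat_btwn (lt_of_le_of_ne hy0.2 hys)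
    exact hy q hq ⟨hy0.1, hyq.le⟩
  · change f ∈ K
    rw [← Submodule.orthogonal_orthogonal K, Submodule.mem_orthogonal]
    intro g hg
    have h : ∀ᵐ x ∂mu01, ∀ q : ℚ, sSup A < q → (q : ℝ) < x → g x = 0 := by
      refine ae_all_iff.2 fun q => ?_
      by_cases hq : sSup A < q ∧ (q : ℝ) ≤ 1
      · have hqA : (q : ℝ) ∉ A := notMem_of_csSup_lt hq.1 hAb
        have hq01 : (q : ℝ) ∈ Set.Icc (0 : ℝ) 1 := ⟨(le_csSup hAb hA0).trans hq.1.le, hq.2⟩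
        have hex : ∃ u ∈ Minf N mono, ¬ ∀ᵐ y ∂mu01, y ∈ Set.Icc (0 : ℝ) q → u y = 0 := by
          by_contra! hall
          exact hqA ⟨hq01, hall⟩
        obtain ⟨u, hu, hune⟩ := hex
        filter_upwards [ae_eq_zero_or_ae_eq_zero_on_Icc hN.monotone hmono hu hg] with x hx _ hqx
        exact hx.resolve_right fun hx' =>
          hune (hx'.mono fun y hy hyq => hy ⟨hyq.1, hyq.2.trans hqx.le⟩)
      · filter_upwards [ae_mu01_mem_Icc] with x hx hq1 hqx
        exact absurd ⟨hq1, hqx.le.trans hx.2⟩ hq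
    rw [L2.inner_def]
    refine integral_eq_zero_of_ae ?_
    filter_upwards [h, hf, ae_mu01_mem_Icc] with x hx hfx hx01
    rcases le_or_gt x (sSup A) with hxs | hxs
    · simp [hfx ⟨hx01.1, hxs⟩]
    · obtain ⟨q, hq, hqx⟩ := exists_rat_btwn hxs
      simp [hx q hq hqx]
end
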